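/- Pointwise control of the Littlewood–Paley g-function by the area function: for f ∈ L¹(ℝⁿ) define g(f)(x)² = ∫_{(ℝ₊)^m} |∇₁⋯∇_m (f*P_t)(x)|² t₁⋯t_m dt and S(f)(x)² = ∫_{Γ(x)} |∇₁⋯∇_m (f*P_t)(x')|² (t₁⋯t_m dt dx')/|R(x,t)|, where Γ(x) = {(x',t) : x' ∈ R(x,t)}. Then g(f)(x) ≲ S(f)(x) pointwise, with implicit constant depending only on e₁,…,e_m. -/

import Mathlib

open MeasureTheory ENNReal

noncomputable section

/-- The one-dimensional Poisson kernel `P_t(s) = (1/π) t/(t²+s²)`. -/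
def poisson (t s : ℝ) : ℝ := (1 / Real.pi) * (t / (t ^ 2 + s ^ 2))

/-- The twisted rectangle `R(x,r)`. -/
def twistedRect {n m : ℕ} (e : Fin m → EuclideanSpace ℝ (Fin n))
    (x : EuclideanSpace ℝ (Fin n)) (r : Fin m → ℝ) : Set (EuclideanSpace ℝ (Fin n)) :=
  {y | ∃ lam : Fin m → ℝ, (∀ j, |lam j| < r j) ∧ y = x + ∑ j, lam j • e j}

/-- The iterated Poisson integral `(f*P_t)(x)`. -/
def iterP {n m : ℕ} (e : Fin m → EuclideanSpace ℝ (Fin n))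
    (f : EuclideanSpace ℝ (Fin n) → ℝ)
    (x : EuclideanSpace ℝ (Fin n)) (t : Fin m → ℝ) : ℝ :=
  ∫ s : Fin m → ℝ, (∏ j, poisson (t j) (s j)) * f (x - ∑ j, s j • e j)

/-- A component of the mixed gradient `∇₁⋯∇_m`: for each `μ`, apply `X_μ`
(if `α μ = true`) or `∂_{t_μ}` (if `α μ = false`). -/
def Dmix {n m : ℕ} (e : Fin m → EuclideanSpace ℝ (Fin n)) (α : Fin m → Bool)
    (g : EuclideanSpace ℝ (Fin n) → (Fin m → ℝ) → ℝ) :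
    EuclideanSpace ℝ (Fin n) → (Fin m → ℝ) → ℝ :=
  (List.finRange m).foldl
    (fun h μ => if α μ then (fun x t => lineDeriv ℝ (fun y => h y t) x (e μ))
      else (fun x t => deriv (fun τ => h x (Function.update t μ τ)) (t μ))) g

/-- The squared length `|∇₁⋯∇_m (f*P_t)(x)|²` of the mixed gradient. -/
def gradSq {n m : ℕ} (e : Fin m → EuclideanSpace ℝ (Fin n))
    (f : EuclideanSpace ℝ (Fin n) → ℝ)
    (x : EuclideanSpace ℝ (Fin n)) (t : Fin m → ℝ) : ℝ :=
  ∑ α : Fin m → Bool, (Dmix e α (iterP e f) x t) ^ 2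

/-- The non-tangential approach region `Γ_β(x)`. -/
def ntCone {n m : ℕ} (e : Fin m → EuclideanSpace ℝ (Fin n)) (β : ℝ)
    (x : EuclideanSpace ℝ (Fin n)) : Set (EuclideanSpace ℝ (Fin n) × (Fin m → ℝ)) :=
  {p | (∀ j, 0 < p.2 j) ∧ p.1 ∈ twistedRect e x (fun j => β * p.2 j)}

/-- The Lusin–Littlewood–Paley area function `S(f)`. -/
def Sfun {n m : ℕ} (e : Fin m → EuclideanSpace ℝ (Fin n))
    (f : EuclideanSpace ℝ (Fin n) → ℝ) (x : EuclideanSpace ℝ (Fin n)) : ℝ≥0∞ :=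
  (∫⁻ p : EuclideanSpace ℝ (Fin n) × (Fin m → ℝ),
      Set.indicator (ntCone e 1 x)
        (fun p => ENNReal.ofReal (gradSq e f p.1 p.2) *
          (∏ j, ENNReal.ofReal (p.2 j)) / volume (twistedRect e x p.2)) p) ^ (1/2 : ℝ)

/-- The Littlewood–Paley `g`-function. -/
def gfun {n m : ℕ} (e : Fin m → EuclideanSpace ℝ (Fin n))
    (f : EuclideanSpace ℝ (Fin n) → ℝ) (x : EuclideanSpace ℝ (Fin n)) : ℝ≥0∞ :=
  (∫⁻ t : Fin m → ℝ,
      Set.indicator {t : Fin m → ℝ | ∀ j, 0 < t j}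
        (fun t => ENNReal.ofReal (gradSq e f x t) * ∏ j, ENNReal.ofReal (t j)) t) ^ (1/2 : ℝ)

/-!
Writing `wⱼ = sⱼ + i tⱼ`, the kernel `∏ⱼ P_{tⱼ}(sⱼ)` and its mixed first order derivatives are
products of real parts of holomorphic functions of one variable, so each component of
`∇₁⋯∇_m (f*P_t)(x + ∑ⱼ sⱼ eⱼ)` has the solid mean value property on products of discs. By
Cauchy–Schwarz, the square of its value at `(i t₁, …, i t_m)` is at most the mean of its square over
the polydisc `∏ⱼ D(i tⱼ, tⱼ/2)`. These polydiscs lie in the cone `|sⱼ| < tⱼ`, and Tonelli turns the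
integral over `t` of their means into an integral over that cone, with a loss of `3 ^ m`.

For fixed `t`, the remaining integral over the box `|sⱼ| < tⱼ` is compared with the average over
`R(x,t)`, the image of the box. The parametrization of `R(x,t)` is not injective when `n < m`;
instead of changing variables, one averages over translations of the box by its own points, which
costs only the volume ratio between twice the box and `t₁⋯t_m`, namely `4 ^ m`.
-/

section AdditiveGroups

variable {G H : Type*} [AddGroup G] [MeasurableSpace G] [MeasurableAdd G]
  [AddCommGroup H] [MeasurableSpace H] [MeasurableAdd₂ H] [MeasurableNeg H]

-- Neither `T` nor its restriction to `B` need be injective: the inequality holds after each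
-- translation by a point of the image of `B`, and averaging over those translations removes `T`.
lemma measure_image_mul_lintegral_le (ν : Measure G) [SFinite ν] [ν.IsAddRightInvariant]
    (μ : Measure H) [SFinite μ] [μ.IsAddLeftInvariant] [μ.IsNegInvariant]
    {T : G →+ H} (hT : Measurable T) {B : Set G} {w w' : G → ℝ≥0∞} (hw' : Measurable w')
    (hww' : ∀ b ∈ B, ∀ s, w s ≤ w' (s + b)) {φ : H → ℝ≥0∞} (hφ : Measurable φ) (x : H) :
    μ (T '' B) * ∫⁻ s, w s * φ (x + T s) ∂ν ≤ (∫⁻ s, w' s ∂ν) * ∫⁻ z, φ z ∂μ := by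
  have hshift : Measurable fun p : H × G => w' p.2 * φ (x + T p.2 - p.1) := by
    simp only [sub_eq_add_neg]
    fun_prop
  have hslice : ∀ s, Measurable fun y => φ (x + T s - y) := by
    simp only [sub_eq_add_neg]
    fun_prop
  have htranslate : ∀ y ∈ T '' B,
      ∫⁻ s, w s * φ (x + T s) ∂ν ≤ ∫⁻ s, w' s * φ (x + T s - y) ∂ν := by
    rintro _ ⟨b, hb, rfl⟩
    rw [← lintegral_add_right_eq_self (fun s => w' s * φ (x + T s - T b)) b]
    refine lintegral_mono fun s => ?_
    rw [map_add, ← add_assoc, add_sub_cancel_right]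
    exact mul_le_mul_left (hww' b hb s) _
  calc μ (T '' B) * ∫⁻ s, w s * φ (x + T s) ∂ν
      = ∫⁻ _ in T '' B, ∫⁻ s, w s * φ (x + T s) ∂ν ∂μ := by
        rw [setLIntegral_const, mul_comm]
    _ ≤ ∫⁻ y in T '' B, ∫⁻ s, w' s * φ (x + T s - y) ∂ν ∂μ :=
        setLIntegral_mono hshift.lintegral_prod_right' htranslate
    _ ≤ ∫⁻ y, ∫⁻ s, w' s * φ (x + T s - y) ∂ν ∂μ := setLIntegral_le_lintegral _ _
    _ = ∫⁻ s, ∫⁻ y, w' s * φ (x + T s - y) ∂μ ∂ν := lintegral_lintegral_swap hshift.aemeasurable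
    _ = ∫⁻ s, w' s * ∫⁻ z, φ z ∂μ ∂ν := by
        refine lintegral_congr fun s => ?_
        rw [lintegral_const_mul _ (hslice s), lintegral_sub_left_eq_self]
    _ = (∫⁻ s, w' s ∂ν) * ∫⁻ z, φ z ∂μ := lintegral_mul_const _ hw'

end AdditiveGroups

section TwistedRectangles

variable {n m : ℕ} {e : Fin m → EuclideanSpace ℝ (Fin n)}

/-- The open box `∏ⱼ (-rⱼ, rⱼ)`, the parameter domain of the twisted rectangle `R(x,r)`. -/
def centeredBox {m : ℕ} (r : Fin m → ℝ) : Set (Fin m → ℝ) :=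
  Set.univ.pi fun j => Set.Ioo (-r j) (r j)

lemma mem_centeredBox {r s : Fin m → ℝ} : s ∈ centeredBox r ↔ ∀ j, |s j| < r j := by
  simp only [centeredBox, Set.mem_univ_pi, Set.mem_Ioo, abs_lt]

lemma measurableSet_centeredBox (r : Fin m → ℝ) : MeasurableSet (centeredBox r) :=
  MeasurableSet.univ_pi fun _ => measurableSet_Ioo

lemma volume_centeredBox (r : Fin m → ℝ) :
    volume (centeredBox r) = ∏ j, ENNReal.ofReal (2 * r j) := by
  rw [centeredBox, volume_pi_pi]
  simp only [Real.volume_Ioo, sub_neg_eq_add, two_mul]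

lemma twistedRect_eq_image (x : EuclideanSpace ℝ (Fin n)) (r : Fin m → ℝ) :
    twistedRect e x r = (x + ·) '' (Fintype.linearCombination ℝ e '' centeredBox r) := by
  ext y
  simp only [twistedRect, Set.mem_ofPred_eq, Set.mem_image, exists_exists_and_eq_and,
    mem_centeredBox, Fintype.linearCombination_apply, eq_comm (a := y)]

lemma volume_twistedRect (x : EuclideanSpace ℝ (Fin n)) (r : Fin m → ℝ) :
    volume (twistedRect e x r) = volume (Fintype.linearCombination ℝ e '' centeredBox r) := by
  rw [twistedRect_eq_image, Set.image_add_left, measure_preimage_add]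

lemma surjective_linearCombination (he : Submodule.span ℝ (Set.range e) = ⊤) :
    Function.Surjective (Fintype.linearCombination ℝ e) := by
  rw [← LinearMap.range_eq_top, Fintype.range_linearCombination, he]

lemma isOpen_setOf_mem_twistedRect (he : Submodule.span ℝ (Set.range e) = ⊤)
    (x : EuclideanSpace ℝ (Fin n)) :
    IsOpen {p : EuclideanSpace ℝ (Fin n) × (Fin m → ℝ) | p.1 ∈ twistedRect e x p.2} := by
  have hopen : IsOpen {q : (Fin m → ℝ) × (Fin m → ℝ) | ∀ j, |q.1 j| < q.2 j} := by
    rw [Set.ofPred_forall]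
    exact isOpen_iInter_of_finite fun j => isOpen_lt (by fun_prop) (by fun_prop)
  have hmap : IsOpenMap (Prod.map (x + Fintype.linearCombination ℝ e ·) (id (α := Fin m → ℝ))) :=
    ((isOpenMap_add_left x).comp (LinearMap.isOpenMap_of_finiteDimensional _
      (surjective_linearCombination he))).prodMap IsOpenMap.id
  convert hmap _ hopen using 1
  ext ⟨y, t⟩
  simp [twistedRect, Fintype.linearCombination_apply, eq_comm (a := y)]

lemma isOpen_twistedRect (he : Submodule.span ℝ (Set.range e) = ⊤)
    (x : EuclideanSpace ℝ (Fin n)) (r : Fin m → ℝ) : IsOpen (twistedRect e x r) :=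
  (isOpen_setOf_mem_twistedRect he x).preimage (Continuous.prodMk_left r)

lemma measurable_volume_twistedRect (he : Submodule.span ℝ (Set.range e) = ⊤)
    (x : EuclideanSpace ℝ (Fin n)) :
    Measurable fun r : Fin m → ℝ => volume (twistedRect e x r) :=
  measurable_measure_prodMk_right (isOpen_setOf_mem_twistedRect he x).measurableSet

lemma volume_twistedRect_ne_zero (he : Submodule.span ℝ (Set.range e) = ⊤)
    (x : EuclideanSpace ℝ (Fin n)) {r : Fin m → ℝ} (hr : ∀ j, 0 < r j) :
    volume (twistedRect e x r) ≠ 0 :=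
  ((isOpen_twistedRect he x r).measure_pos _ ⟨x, 0, by simpa using hr, by simp⟩).ne'

lemma volume_twistedRect_ne_top (x : EuclideanSpace ℝ (Fin n)) (r : Fin m → ℝ) :
    volume (twistedRect e x r) ≠ ⊤ := by
  have hcompact : IsCompact (Fintype.linearCombination ℝ e ''
      Set.univ.pi fun j => Set.Icc (-r j) (r j)) :=
    (isCompact_univ_pi fun _ => isCompact_Icc).image
      (LinearMap.continuous_of_finiteDimensional _)
  rw [volume_twistedRect]
  exact measure_ne_top_of_subset
    (Set.image_mono (Set.pi_mono fun _ _ => Set.Ioo_subset_Icc_self)) hcompact.measure_ne_top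

lemma centeredBox_indicator_le_add {r : Fin m → ℝ} {b : Fin m → ℝ} (hb : b ∈ centeredBox r)
    (s : Fin m → ℝ) : (centeredBox r).indicator 1 s ≤
      (centeredBox (2 • r)).indicator (1 : (Fin m → ℝ) → ℝ≥0∞) (s + b) := by
  refine Set.indicator_apply_le' (fun hs => ?_) fun _ => zero_le
  rw [mem_centeredBox] at hb hs
  rw [Set.indicator_of_mem (mem_centeredBox.2 fun j => ?_), Pi.one_apply, Pi.one_apply]
  exact (abs_add_le _ _).trans_lt (by simpa [two_mul] using add_lt_add (hs j) (hb j))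

lemma volume_centeredBox_two_nsmul (r : Fin m → ℝ) :
    volume (centeredBox (2 • r)) = 4 ^ m * ∏ j, ENNReal.ofReal (r j) := by
  rw [volume_centeredBox, ← Fin.prod_const, ← Finset.prod_mul_distrib]
  refine Finset.prod_congr rfl fun j _ => ?_
  rw [Pi.smul_apply, nsmul_eq_mul, ← mul_assoc, ENNReal.ofReal_mul (by norm_num)]
  norm_num

lemma setLIntegral_centeredBox_le (he : Submodule.span ℝ (Set.range e) = ⊤)
    {φ : EuclideanSpace ℝ (Fin n) → ℝ≥0∞} (hφ : Measurable φ)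
    (x : EuclideanSpace ℝ (Fin n)) {r : Fin m → ℝ} (hr : ∀ j, 0 < r j) :
    ∫⁻ s in centeredBox r, φ (x + ∑ j, s j • e j) ≤
      4 ^ m * ((∏ j, ENNReal.ofReal (r j)) / volume (twistedRect e x r) *
        ∫⁻ z in twistedRect e x r, φ z) := by
  set R := twistedRect e x r
  have hR : MeasurableSet R := (isOpen_twistedRect he x r).measurableSet
  have hinside : ∫⁻ s in centeredBox r, φ (x + ∑ j, s j • e j) =
      ∫⁻ s, (centeredBox r).indicator 1 s *
        R.indicator φ (x + Fintype.linearCombination ℝ e s) := by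
    rw [← lintegral_indicator (measurableSet_centeredBox r)]
    refine lintegral_congr fun s => ?_
    by_cases hs : s ∈ centeredBox r
    · have hmem : x + ∑ j, s j • e j ∈ R := ⟨s, mem_centeredBox.1 hs, rfl⟩
      simp [hs, hmem, Fintype.linearCombination_apply]
    · simp [hs]
  have hweak := measure_image_mul_lintegral_le volume volume
    (T := (Fintype.linearCombination ℝ e).toAddMonoidHom)
    (LinearMap.continuous_of_finiteDimensional _).measurable
    (measurable_one.indicator (measurableSet_centeredBox _))
    (fun _ hb s => centeredBox_indicator_le_add (r := r) hb s) (hφ.indicator hR) x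
  simp only [LinearMap.toAddMonoidHom_coe, ← volume_twistedRect x r, ← hinside,
    lintegral_indicator_one (measurableSet_centeredBox _), volume_centeredBox_two_nsmul,
    lintegral_indicator hR] at hweak
  rw [← ENNReal.mul_le_mul_iff_right (volume_twistedRect_ne_zero he x hr)
    (volume_twistedRect_ne_top x r)]
  refine hweak.trans_eq ?_
  rw [← one_mul (4 ^ m * _ * _), ← ENNReal.mul_inv_cancel (volume_twistedRect_ne_zero he x hr)
    (volume_twistedRect_ne_top x r), div_eq_mul_inv]
  ring

end TwistedRectangles

section QuadraticDecay

variable {n m : ℕ} {e : Fin m → EuclideanSpace ℝ (Fin n)} {f : EuclideanSpace ℝ (Fin n) → ℝ}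

/-- The weight `∏ⱼ 1/(1 + sⱼ²)`, which up to constants dominates the product Poisson kernels and
their derivatives. -/
def quadDecay {m : ℕ} (s : Fin m → ℝ) : ℝ := ∏ j, (1 + s j ^ 2)⁻¹

lemma quadDecay_pos (s : Fin m → ℝ) : 0 < quadDecay s :=
  Finset.prod_pos fun _ _ => by positivity

lemma integrable_quadDecay : Integrable (quadDecay (m := m)) :=
  Integrable.fintype_prod fun _ => integrable_inv_one_add_sq

lemma continuous_quadDecay : Continuous (quadDecay (m := m)) :=
  continuous_finsetProd _ fun j _ => Continuous.inv₀ (by fun_prop) fun s => by positivity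

lemma quadDecay_le_add {b : Fin m → ℝ} (hb : ∀ j, |b j| < 1) (s : Fin m → ℝ) :
    quadDecay s ≤ 3 ^ m * quadDecay (s + b) := by
  rw [quadDecay, quadDecay, ← Fin.prod_const, ← Finset.prod_mul_distrib]
  refine Finset.prod_le_prod (fun _ _ => by positivity) fun j _ => ?_
  have hbj : b j ^ 2 < 1 := (sq_lt_one_iff_abs_lt_one _).2 (hb j)
  rw [Pi.add_apply, ← div_eq_mul_inv, inv_eq_one_div, div_le_div_iff₀ (by positivity)
    (by positivity)]
  nlinarith [sq_nonneg (s j - b j)]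

lemma quasiMeasurePreserving_sub_sum (he : Submodule.span ℝ (Set.range e) = ⊤)
    (y : EuclideanSpace ℝ (Fin n)) :
    Measure.QuasiMeasurePreserving fun s : Fin m → ℝ => y - ∑ j, s j • e j := by
  have hL : Measure.QuasiMeasurePreserving (Fintype.linearCombination ℝ e) := by
    refine ⟨(LinearMap.continuous_of_finiteDimensional _).measurable,
      Measure.AbsolutelyContinuous.mk fun N hN hN0 => ?_⟩
    rw [Measure.map_apply (LinearMap.continuous_of_finiteDimensional _).measurable hN]
    simpa [ae_iff, Set.preimage] using (ae_comp_linearMap_mem_iff _ volume volume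
      (surjective_linearCombination he) hN.compl).2 (by simpa [ae_iff] using hN0)
  exact (Measure.measurePreserving_sub_left volume y).quasiMeasurePreserving.comp hL

lemma integrable_quadDecay_mul (he : Submodule.span ℝ (Set.range e) = ⊤) (hf : Integrable f)
    (y : EuclideanSpace ℝ (Fin n)) :
    Integrable fun s : Fin m → ℝ => quadDecay s * f (y - ∑ j, s j • e j) := by
  wlog hfm : Measurable f generalizing f
  · have hae := (quasiMeasurePreserving_sub_sum he y).ae_eq_comp hf.1.ae_eq_mk
    refine (this (hf.congr hf.1.ae_eq_mk) hf.1.stronglyMeasurable_mk.measurable).congr ?_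
    filter_upwards [hae] with s hs
    exact congrArg (quadDecay s * ·) hs.symm
  have hcont : Continuous fun s : Fin m → ℝ => y - ∑ j, s j • e j := by fun_prop
  refine ⟨(continuous_quadDecay.measurable.mul (hfm.comp hcont.measurable)).aestronglyMeasurable,
    ?_⟩
  have hweak := measure_image_mul_lintegral_le volume volume
    (T := (Fintype.linearCombination ℝ e).toAddMonoidHom) (B := centeredBox 1)
    (w := fun s => ENNReal.ofReal (quadDecay s))
    (w' := fun s => ENNReal.ofReal (3 ^ m * quadDecay s))
    (LinearMap.continuous_of_finiteDimensional _).measurable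
    (continuous_quadDecay.measurable.const_mul _).ennreal_ofReal
    (fun b hb s => ENNReal.ofReal_le_ofReal (quadDecay_le_add (mem_centeredBox.1 hb) s))
    (φ := fun z => ‖f (y - z)‖ₑ) (by fun_prop) 0
  have hright : (∫⁻ s : Fin m → ℝ, ENNReal.ofReal (3 ^ m * quadDecay s)) *
      ∫⁻ z, ‖f (y - z)‖ₑ < ⊤ := by
    rw [lintegral_sub_left_eq_self (fun z => ‖f z‖ₑ) y]
    exact ENNReal.mul_lt_top (integrable_quadDecay.const_mul _).lintegral_lt_top
      hf.hasFiniteIntegral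
  have hleft : volume ((Fintype.linearCombination ℝ e).toAddMonoidHom '' centeredBox 1) ≠ 0 := by
    rw [LinearMap.toAddMonoidHom_coe, ← volume_twistedRect 0]
    exact volume_twistedRect_ne_zero he 0 fun _ => zero_lt_one
  refine lt_of_le_of_lt (lintegral_mono fun s => le_of_eq ?_)
    (ENNReal.lt_top_of_mul_ne_top_right (hweak.trans_lt hright).ne hleft)
  rw [enorm_mul, Real.enorm_of_nonneg (quadDecay_pos s).le, zero_add]
  rfl

end QuadraticDecay

section PoissonKernels

open Complex

/-- The direction of the half-plane variable `z = s + it` in which a component of `∇_μ`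
differentiates: `1` for `X_μ` (`true`) and `i` for `∂_{t_μ}` (`false`). -/
def gradDir (b : Bool) : ℂ := if b then 1 else I

/-- A holomorphic function of `z = s + it` whose real part is the Poisson kernel `P_t(s)` (for
`none`) or its derivative in the direction `gradDir b` (for `some b`). -/
def poissonHol : Option Bool → ℂ → ℂ
  | none, z => Real.pi⁻¹ • (I * z⁻¹)
  | some b, z => Real.pi⁻¹ • (I * (-(z ^ 2)⁻¹ * gradDir b))

/-- The Poisson kernel, or one of its two first order derivatives, as a function of
`z = s + it`. -/
def poissonKer (o : Option Bool) (z : ℂ) : ℝ := (poissonHol o z).re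

lemma norm_gradDir (b : Bool) : ‖gradDir b‖ = 1 := by
  cases b <;> simp [gradDir]

lemma poissonKer_none (z : ℂ) : poissonKer none z = poisson z.im z.re := by
  simp only [poissonKer, poissonHol, poisson, real_smul, re_ofReal_mul, I_mul_re, inv_im,
    normSq_apply, neg_div, neg_neg, one_div, ← pow_two, add_comm]

lemma measurable_poissonKer (o : Option Bool) : Measurable (poissonKer o) := by
  cases o <;> unfold poissonKer poissonHol <;> fun_prop

lemma differentiableAt_poissonHol (o : Option Bool) {z : ℂ} (hz : z ≠ 0) :
    DifferentiableAt ℂ (poissonHol o) z := by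
  cases o <;> unfold poissonHol <;> fun_prop (disch := simp [hz])

lemma hasDerivAt_poissonKer (b : Bool) (z : ℂ) {r : ℝ} (hz : z + r * gradDir b ≠ 0) :
    HasDerivAt (fun r : ℝ => poissonKer none (z + r * gradDir b))
      (poissonKer (some b) (z + r * gradDir b)) r := by
  have hline : HasDerivAt (fun r : ℝ => z + r * gradDir b) (gradDir b) r := by
    simpa using ((hasDerivAt_id r).ofReal_comp.mul_const (gradDir b)).const_add z
  exact reCLM.hasFDerivAt.comp_hasDerivAt r
    ((((hasDerivAt_inv hz).comp r hline).const_mul I).const_smul Real.pi⁻¹)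

lemma abs_poissonKer_le (o : Option Bool) {z : ℂ} (hz : 0 < z.im) :
    |poissonKer o z| ≤ (z.im + 1) / ‖z‖ ^ 2 := by
  have hpi : Real.pi⁻¹ ≤ 1 := inv_le_one_of_one_le₀ (by linarith [Real.pi_gt_three])
  suffices ∃ w : ℂ, poissonHol o z = Real.pi⁻¹ • w ∧ |w.re| ≤ (z.im + 1) / ‖z‖ ^ 2 by
    obtain ⟨w, hw, hle⟩ := this
    rw [poissonKer, hw, smul_re, smul_eq_mul, abs_mul, abs_of_pos (inv_pos.2 Real.pi_pos)]
    exact (mul_le_of_le_one_left (abs_nonneg _) hpi).trans hle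
  cases o with
  | none =>
    refine ⟨_, rfl, ?_⟩
    rw [I_mul_re, inv_im, neg_div, neg_neg, abs_of_nonneg (div_nonneg hz.le (normSq_nonneg z)),
      normSq_eq_norm_sq]
    gcongr
    linarith
  | some b =>
    refine ⟨_, rfl, (abs_re_le_norm _).trans ?_⟩
    rw [norm_mul, norm_mul, norm_neg, norm_inv, norm_pow, norm_I, norm_gradDir, one_mul, mul_one,
      inv_eq_one_div]
    gcongr
    linarith

lemma abs_re_and_im_of_mem_ball {t : ℝ} {w : ℂ} (hw : w ∈ Metric.ball (t * I) (t / 2)) :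
    |w.re| < t / 2 ∧ t / 2 < w.im ∧ w.im < 3 * t / 2 := by
  rw [mem_ball_iff_norm] at hw
  have hre : |w.re| < t / 2 := by
    simpa using (abs_re_le_norm (w - t * I)).trans_lt hw
  have him : |w.im - t| < t / 2 := by
    simpa using (abs_im_le_norm (w - t * I)).trans_lt hw
  rw [abs_lt] at him
  exact ⟨hre, by linarith, by linarith⟩

lemma exists_abs_poissonKer_le {t : ℝ} (ht : 0 < t) :
    ∃ C, ∀ (o : Option Bool) (s : ℝ), ∀ w ∈ Metric.ball (t * I) (t / 2),
      |poissonKer o (s + w)| ≤ C * (1 + s ^ 2)⁻¹ := by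
  refine ⟨(3 * t / 2 + 1) * (2 + 4 / t ^ 2), fun o s w hw => ?_⟩
  obtain ⟨hre, him, him'⟩ := abs_re_and_im_of_mem_ball hw
  have hw_im : 0 < w.im := by linarith
  have him_eq : (s + w).im = w.im := by simp
  have him_pos : 0 < (s + w).im := him_eq ▸ hw_im
  have hnorm : ‖s + w‖ ^ 2 = (s + w.re) ^ 2 + w.im ^ 2 := by
    rw [← normSq_eq_norm_sq, normSq_apply]
    simp [pow_two]
  have hre_sq : w.re ^ 2 ≤ w.im ^ 2 := sq_le_sq' (by linarith [neg_abs_le w.re])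
    (by linarith [le_abs_self w.re])
  have hone : 1 ≤ 4 / t ^ 2 * w.im ^ 2 := by
    rw [div_mul_eq_mul_div, one_le_div (by positivity)]
    nlinarith
  have hpos : 0 < ‖s + w‖ ^ 2 := by rw [hnorm]; positivity
  have hdecay : 1 + s ^ 2 ≤ (2 + 4 / t ^ 2) * ‖s + w‖ ^ 2 := by
    have : 0 ≤ 4 / t ^ 2 * (s + w.re) ^ 2 := by positivity
    rw [hnorm]
    nlinarith [sq_nonneg (s + 2 * w.re)]
  refine (abs_poissonKer_le o him_pos).trans ?_
  rw [him_eq, mul_assoc, div_eq_mul_inv, ← div_eq_mul_inv (2 + 4 / t ^ 2), inv_eq_one_div]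
  gcongr ?_ * ?_
  · linarith
  · rwa [div_le_div_iff₀ hpos (by positivity), one_mul]

end PoissonKernels

section DiscMeanValue

open Complex Real Metric

variable {E : Type*} [NormedAddCommGroup E] [NormedSpace ℝ E] {f : ℂ → E} {c : ℂ} {R : ℝ}

lemma setIntegral_ball_eq_setIntegral_circleMap (f : ℂ → E) (c : ℂ) (R : ℝ) :
    ∫ z in ball c R, f z =
      ∫ p in Set.Ioo 0 R ×ˢ Set.Ioo (-π) π, p.1 • f (circleMap c p.1 p.2) := by
  have hpolar : ∀ p : ℝ × ℝ, c + Complex.polarCoord.symm p = circleMap c p.1 p.2 := fun p => by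
    rw [Complex.polarCoord_symm_apply, circleMap, Complex.exp_mul_I, ofReal_cos, ofReal_sin]
  have hsub : Set.Ioo 0 R ×ˢ Set.Ioo (-π) π ⊆ polarCoord.target :=
    Set.prod_mono Set.Ioo_subset_Ioi_self subset_rfl
  rw [← integral_indicator measurableSet_ball, ← integral_add_left_eq_self _ c,
    ← Complex.integral_comp_polarCoord_symm, ← Set.inter_eq_right.2 hsub,
    ← setIntegral_indicator (measurableSet_Ioo.prod measurableSet_Ioo)]
  refine setIntegral_congr_fun polarCoord.open_target.measurableSet fun p hp => ?_
  obtain ⟨hr, hθ⟩ : 0 < p.1 ∧ p.2 ∈ Set.Ioo (-π) π := hp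
  have hmem : circleMap c p.1 p.2 ∈ ball c R ↔ p ∈ Set.Ioo 0 R ×ˢ Set.Ioo (-π) π := by
    simp [dist_eq_norm, abs_of_pos hr, hr, hθ.1, hθ.2, Set.mem_prod]
  by_cases hp : p ∈ Set.Ioo 0 R ×ˢ Set.Ioo (-π) π
  · simp only [hpolar, Set.indicator_of_mem hp, Set.indicator_of_mem (hmem.2 hp)]
  · simp only [hpolar, Set.indicator_of_notMem hp, Set.indicator_of_notMem (mt hmem.1 hp),
      smul_zero]

lemma setIntegral_Ioo_circleMap (f : ℂ → E) (c : ℂ) (r : ℝ) :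
    ∫ θ in Set.Ioo (-π) π, f (circleMap c r θ) = (2 * π) • circleAverage f c r := by
  rw [circleAverage_eq_integral_add (-π), smul_inv_smul₀ two_pi_pos.ne',
    intervalIntegral.integral_comp_add_right (fun θ => f (circleMap c r θ)),
    ← integral_Ioc_eq_integral_Ioo, ← intervalIntegral.integral_of_le (by linarith [pi_pos])]
  congr 1 <;> ring

lemma setIntegral_ball_eq_integral_circleAverage (hR : 0 ≤ R)
    (hf : ContinuousOn f (closedBall c R)) :
    ∫ z in ball c R, f z = ∫ r in 0..R, (2 * π * r) • circleAverage f c r := by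
  have hmaps : Set.MapsTo (fun p : ℝ × ℝ => circleMap c p.1 p.2)
      (Set.Icc 0 R ×ˢ Set.Icc (-π) π) (closedBall c R) := fun p hp => by
    simpa [dist_eq_norm, abs_of_nonneg hp.1.1] using hp.1.2
  have hcont : ContinuousOn (fun p : ℝ × ℝ => p.1 • f (circleMap c p.1 p.2))
      (Set.Icc 0 R ×ˢ Set.Icc (-π) π) :=
    continuousOn_fst.smul (hf.comp (by unfold circleMap; fun_prop) hmaps)
  have hint := (hcont.integrableOn_compact (μ := volume)
    (isCompact_Icc.prod isCompact_Icc)).mono_set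
    (Set.prod_mono Set.Ioo_subset_Icc_self Set.Ioo_subset_Icc_self)
  rw [setIntegral_ball_eq_setIntegral_circleMap, Measure.volume_eq_prod, setIntegral_prod _ hint,
    intervalIntegral.integral_of_le hR, integral_Ioc_eq_integral_Ioo]
  refine setIntegral_congr_fun measurableSet_Ioo fun r _ => ?_
  rw [integral_smul, setIntegral_Ioo_circleMap, smul_smul, mul_comm r]

lemma setIntegral_ball_of_harmonicOnNhd [CompleteSpace E] (hR : 0 ≤ R)
    (hf : InnerProductSpace.HarmonicOnNhd f (closedBall c R)) :
    ∫ z in ball c R, f z = volume.real (ball c R) • f c := by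
  have hav : ∀ r ∈ Set.uIcc 0 R, (2 * π * r) • circleAverage f c r = (2 * π * r) • f c := by
    intro r hr
    rw [Set.uIcc_of_le hR] at hr
    rw [(hf.mono (closedBall_subset_closedBall
      ((abs_of_nonneg hr.1).trans_le hr.2))).circleAverage_eq]
  rw [setIntegral_ball_eq_integral_circleAverage hR hf.continuousOn,
    intervalIntegral.integral_congr hav, intervalIntegral.integral_smul_const,
    intervalIntegral.integral_const_mul, integral_id, measureReal_def, Complex.volume_ball,
    ENNReal.toReal_mul, ENNReal.toReal_pow, ENNReal.toReal_ofReal hR, ENNReal.coe_toReal,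
    NNReal.coe_real_pi]
  congr 1
  ring

end DiscMeanValue

open Complex in
lemma setIntegral_ball_poissonKer (o : Option Bool) (s : ℝ) {t : ℝ} (ht : 0 < t) :
    ∫ w in Metric.ball (t * I) (t / 2), poissonKer o (s + w) =
      volume.real (Metric.ball (t * I) (t / 2)) * poissonKer o (s + t * I) := by
  refine setIntegral_ball_of_harmonicOnNhd (by positivity) fun w hw => ?_
  have him : 0 < w.im := by
    have h := (abs_im_le_norm (w - t * I)).trans (mem_closedBall_iff_norm.1 hw)
    simp only [sub_im, mul_im, ofReal_re, I_im, mul_one, ofReal_im, I_re, mul_zero, add_zero]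
      at h
    linarith [neg_le_of_abs_le h]
  have hopen : IsOpen {w : ℂ | 0 < w.im} := isOpen_lt continuous_const continuous_im
  refine AnalyticAt.harmonicAt_re (f := fun w : ℂ => poissonHol o (s + w))
    (DifferentiableOn.analyticAt (s := {w : ℂ | 0 < w.im}) (fun z hz => ?_) (hopen.mem_nhds him))
  have hz : (s : ℂ) + z ≠ 0 := fun h => hz.ne' (by simpa using congrArg im h)
  exact ((differentiableAt_poissonHol o hz).comp z (by fun_prop)).differentiableWithinAt

section ProductKernels

open Complex

variable {n m : ℕ} {e : Fin m → EuclideanSpace ℝ (Fin n)} {f : EuclideanSpace ℝ (Fin n) → ℝ}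
  {t : Fin m → ℝ}

/-- The point `(i t₁, …, i t_m)` of the product of half-planes. -/
def axisPoint {m : ℕ} (t : Fin m → ℝ) : Fin m → ℂ := fun j => t j * I

/-- The polydisc `∏ⱼ D(i tⱼ, tⱼ/2)` in the product of half-planes. -/
def polydisc {m : ℕ} (t : Fin m → ℝ) : Set (Fin m → ℂ) :=
  Set.univ.pi fun j => Metric.ball (t j * I) (t j / 2)

/-- The product of the kernels `poissonKer (o j)`, as a function of `wⱼ = sⱼ + i tⱼ`. -/
def prodKer {m : ℕ} (o : Fin m → Option Bool) (w : Fin m → ℂ) : ℝ :=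
  ∏ j, poissonKer (o j) (w j)

/-- The integral of `f` against the product kernel indexed by `o`, extended from `w = i t` to the
product of half-planes; it equals `f*P_t` when every `o j` is `none`, and a component of
`∇₁⋯∇_m (f*P_t)` when none is. -/
def poissonExt {n m : ℕ} (e : Fin m → EuclideanSpace ℝ (Fin n))
    (f : EuclideanSpace ℝ (Fin n) → ℝ) (o : Fin m → Option Bool)
    (y : EuclideanSpace ℝ (Fin n)) (w : Fin m → ℂ) : ℝ :=
  ∫ s : Fin m → ℝ, prodKer o (ofReal ∘ s + w) * f (y - ∑ j, s j • e j)

lemma axisPoint_mem_polydisc (ht : ∀ j, 0 < t j) : axisPoint t ∈ polydisc t :=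
  fun j _ => Metric.mem_ball_self (half_pos (ht j))

lemma isOpen_polydisc (t : Fin m → ℝ) : IsOpen (polydisc t) :=
  isOpen_set_pi Set.finite_univ fun _ _ => Metric.isOpen_ball

lemma im_pos_of_mem_polydisc (ht : ∀ j, 0 < t j) {w : Fin m → ℂ} (hw : w ∈ polydisc t)
    (j : Fin m) : 0 < (w j).im := by
  linarith [(abs_re_and_im_of_mem_ball (hw j trivial)).2.1, ht j]

lemma measurable_prodKer (o : Fin m → Option Bool) : Measurable (prodKer o) :=
  Finset.measurable_prod _ fun j _ => (measurable_poissonKer (o j)).comp (measurable_pi_apply j)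

lemma exists_abs_prodKer_le (ht : ∀ j, 0 < t j) :
    ∃ C, ∀ (o : Fin m → Option Bool) (s : Fin m → ℝ), ∀ w ∈ polydisc t,
      |prodKer o (ofReal ∘ s + w)| ≤ C * quadDecay s := by
  choose C hC using fun j => exists_abs_poissonKer_le (ht j)
  refine ⟨∏ j, C j, fun o s w hw => ?_⟩
  rw [prodKer, quadDecay, Finset.abs_prod, ← Finset.prod_mul_distrib]
  exact Finset.prod_le_prod (fun _ _ => abs_nonneg _) fun j _ =>
    hC j (o j) (s j) (w j) (hw j trivial)

lemma prodKer_update_add_single (o : Fin m → Option Bool) (μ : Fin m) (b : Option Bool)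
    (w : Fin m → ℂ) (ζ : ℂ) :
    prodKer (Function.update o μ b) (w + Pi.single μ ζ) =
      poissonKer b (w μ + ζ) * ∏ j ∈ Finset.univ.erase μ, poissonKer (o j) (w j) := by
  rw [prodKer, ← Finset.mul_prod_erase _ _ (Finset.mem_univ μ)]
  congr 1
  · simp
  · refine Finset.prod_congr rfl fun j hj => ?_
    have hne := Finset.ne_of_mem_erase hj
    simp [hne]

lemma hasDerivAt_prodKer {o : Fin m → Option Bool} {μ : Fin m} (ho : o μ = none) (b : Bool)
    {w : Fin m → ℂ} {r : ℝ} (hw : w μ + r * gradDir b ≠ 0) :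
    HasDerivAt (fun r : ℝ => prodKer o (w + Pi.single μ (r * gradDir b)))
      (prodKer (Function.update o μ (some b)) (w + Pi.single μ (r * gradDir b))) r := by
  have hnone : ∀ ζ, prodKer o (w + Pi.single μ ζ) =
      poissonKer none (w μ + ζ) * ∏ j ∈ Finset.univ.erase μ, poissonKer (o j) (w j) := fun ζ => by
    rw [← prodKer_update_add_single, ← ho, Function.update_eq_self]
  simp only [hnone, prodKer_update_add_single]
  exact (hasDerivAt_poissonKer b _ hw).mul_const _

lemma aestronglyMeasurable_prodKer_mul (he : Submodule.span ℝ (Set.range e) = ⊤)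
    (hf : AEStronglyMeasurable f) (o : Fin m → Option Bool) (y : EuclideanSpace ℝ (Fin n))
    (w : Fin m → ℂ) : AEStronglyMeasurable fun s : Fin m → ℝ =>
      prodKer o (ofReal ∘ s + w) * f (y - ∑ j, s j • e j) :=
  ((measurable_prodKer o).comp (by fun_prop)).aestronglyMeasurable.mul
    (hf.comp_quasiMeasurePreserving (quasiMeasurePreserving_sub_sum he y))

lemma exists_integrable_bound_prodKer_mul (he : Submodule.span ℝ (Set.range e) = ⊤)
    (hf : Integrable f) (ht : ∀ j, 0 < t j) (y : EuclideanSpace ℝ (Fin n)) :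
    ∃ bound : (Fin m → ℝ) → ℝ, Integrable bound ∧
      ∀ (o : Fin m → Option Bool) (s : Fin m → ℝ), ∀ w ∈ polydisc t,
        ‖prodKer o (ofReal ∘ s + w) * f (y - ∑ j, s j • e j)‖ ≤ bound s := by
  obtain ⟨C, hC⟩ := exists_abs_prodKer_le ht
  refine ⟨_, (integrable_quadDecay_mul he hf y).norm.const_mul C, fun o s w hw => ?_⟩
  rw [norm_mul, norm_mul, ← mul_assoc, Real.norm_of_nonneg (quadDecay_pos s).le]
  exact mul_le_mul_of_nonneg_right (hC o s w hw) (norm_nonneg _)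

lemma hasDerivAt_poissonExt (he : Submodule.span ℝ (Set.range e) = ⊤) (hf : Integrable f)
    (ht : ∀ j, 0 < t j) {o : Fin m → Option Bool} {μ : Fin m} (ho : o μ = none) (b : Bool)
    (y : EuclideanSpace ℝ (Fin n)) :
    HasDerivAt (fun r : ℝ => poissonExt e f o y (axisPoint t + Pi.single μ (r * gradDir b)))
      (poissonExt e f (Function.update o μ (some b)) y (axisPoint t)) 0 := by
  obtain ⟨bound, hbound_int, hbound⟩ := exists_integrable_bound_prodKer_mul he hf ht y
  set w : ℝ → Fin m → ℂ := fun r => axisPoint t + Pi.single μ (r * gradDir b)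
  have hw_zero : w 0 = axisPoint t := by simp [w]
  have hw_zero_mem : w 0 ∈ polydisc t := hw_zero ▸ axisPoint_mem_polydisc ht
  have hw_cont : Continuous w := continuous_const.add ((continuous_single μ).comp (by fun_prop))
  have hw_nhds : {r | w r ∈ polydisc t} ∈ nhds (0 : ℝ) :=
    hw_cont.continuousAt.eventually_mem
      ((isOpen_polydisc t).mem_nhds hw_zero_mem)
  have hker : ∀ s : Fin m → ℝ, ∀ r, w r ∈ polydisc t →
      HasDerivAt (fun r => prodKer o (ofReal ∘ s + w r))
        (prodKer (Function.update o μ (some b)) (ofReal ∘ s + w r)) r := fun s r hr => by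
    have him := im_pos_of_mem_polydisc ht hr μ
    simp only [w, ← add_assoc]
    refine hasDerivAt_prodKer ho b fun h => him.ne' ?_
    simpa [w] using congrArg im h
  have hmeas := fun o r => aestronglyMeasurable_prodKer_mul he hf.1 o y (w r)
  have hmain := (hasDerivAt_integral_of_dominated_loc_of_deriv_le hw_nhds
    (Filter.Eventually.of_forall (hmeas o))
    (hbound_int.mono' (hmeas o 0) (.of_forall fun s => hbound o s _ hw_zero_mem))
    (hmeas (Function.update o μ (some b)) 0) (.of_forall fun s r hr => hbound _ s _ hr)
    hbound_int (.of_forall fun s r hr => (hker s r hr).mul_const _)).2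
  rwa [hw_zero] at hmain

lemma poissonExt_add_sum (o : Fin m → Option Bool) (y : EuclideanSpace ℝ (Fin n))
    (σ : Fin m → ℝ) (w : Fin m → ℂ) :
    poissonExt e f o (y + ∑ j, σ j • e j) w = poissonExt e f o y (ofReal ∘ σ + w) := by
  rw [poissonExt, ← integral_add_right_eq_self _ σ, poissonExt]
  congr 1 with s
  have hker : ofReal ∘ (s + σ) + w = ofReal ∘ s + (ofReal ∘ σ + w) := by
    ext j
    simp [add_assoc]
  have harg : y + ∑ j, σ j • e j - ∑ j, (s + σ) j • e j = y - ∑ j, s j • e j := by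
    simp only [Pi.add_apply, add_smul, Finset.sum_add_distrib]
    abel
  rw [hker, harg]

lemma iterP_eq_poissonExt (y : EuclideanSpace ℝ (Fin n)) (t : Fin m → ℝ) :
    iterP e f y t = poissonExt e f (fun _ => none) y (axisPoint t) := by
  simp [iterP, poissonExt, prodKer, poissonKer_none, axisPoint]

end ProductKernels

section MixedGradient

open Complex

variable {n m : ℕ} {e : Fin m → EuclideanSpace ℝ (Fin n)} {f : EuclideanSpace ℝ (Fin n) → ℝ}
  {t : Fin m → ℝ}

lemma lineDeriv_poissonExt (he : Submodule.span ℝ (Set.range e) = ⊤) (hf : Integrable f)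
    (ht : ∀ j, 0 < t j) {o : Fin m → Option Bool} {μ : Fin m} (ho : o μ = none)
    (y : EuclideanSpace ℝ (Fin n)) :
    lineDeriv ℝ (fun y => poissonExt e f o y (axisPoint t)) y (e μ) =
      poissonExt e f (Function.update o μ (some true)) y (axisPoint t) := by
  have hline : ∀ r : ℝ, poissonExt e f o (y + r • e μ) (axisPoint t) =
      poissonExt e f o y (axisPoint t + Pi.single μ (r * gradDir true)) := fun r => by
    have hsum : r • e μ = ∑ j, (Pi.single μ r : Fin m → ℝ) j • e j := by
      simp [Pi.single_apply, ite_smul]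
    rw [hsum, poissonExt_add_sum, add_comm]
    congr 2 with j
    by_cases hj : j = μ <;> simp [hj, gradDir]
  simp only [lineDeriv, hline]
  exact (hasDerivAt_poissonExt he hf ht ho true y).deriv

lemma deriv_update_poissonExt (he : Submodule.span ℝ (Set.range e) = ⊤) (hf : Integrable f)
    (ht : ∀ j, 0 < t j) {o : Fin m → Option Bool} {μ : Fin m} (ho : o μ = none)
    (y : EuclideanSpace ℝ (Fin n)) :
    deriv (fun τ => poissonExt e f o y (axisPoint (Function.update t μ τ))) (t μ) =
      poissonExt e f (Function.update o μ (some false)) y (axisPoint t) := by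
  have hupdate : ∀ τ : ℝ, axisPoint (Function.update t μ τ) =
      axisPoint t + Pi.single μ (((τ - t μ : ℝ) : ℂ) * gradDir false) := fun τ => by
    ext j
    by_cases hj : j = μ
    · subst hj
      simp [axisPoint, gradDir, sub_mul]
    · simp [axisPoint, hj]
  have hderiv := hasDerivAt_poissonExt he hf ht ho false y
  rw [← sub_self (t μ)] at hderiv
  simpa only [hupdate] using (hderiv.comp_sub_const (t μ) (t μ)).deriv

lemma foldl_gradient_eq_poissonExt (he : Submodule.span ℝ (Set.range e) = ⊤) (hf : Integrable f)
    (α : Fin m → Bool) {l : List (Fin m)} (hl : l.Nodup) {o : Fin m → Option Bool}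
    (ho : ∀ μ ∈ l, o μ = none) {h : EuclideanSpace ℝ (Fin n) → (Fin m → ℝ) → ℝ}
    (hh : ∀ y t, (∀ j, 0 < t j) → h y t = poissonExt e f o y (axisPoint t))
    (y : EuclideanSpace ℝ (Fin n)) (ht : ∀ j, 0 < t j) :
    l.foldl (fun h μ => if α μ then (fun x t => lineDeriv ℝ (fun y => h y t) x (e μ))
      else (fun x t => deriv (fun τ => h x (Function.update t μ τ)) (t μ))) h y t =
    poissonExt e f (fun j => if j ∈ l then some (α j) else o j) y (axisPoint t) := by
  induction l generalizing o h with
  | nil => simpa using hh y t ht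
  | cons μ l ih =>
    obtain ⟨hμ, hl⟩ := List.nodup_cons.1 hl
    have hoμ := ho μ List.mem_cons_self
    rw [List.foldl_cons, ih hl (o := Function.update o μ (some (α μ)))]
    · congr 1 with j : 1
      by_cases hj : j = μ
      · subst hj; simp [hμ]
      · simp [hj]
    · intro ν hν
      rw [Function.update_of_ne (ne_of_mem_of_not_mem hν hμ)]
      exact ho ν (List.mem_cons_of_mem μ hν)
    · intro y t ht
      cases α μ
      · refine Eq.trans (Filter.EventuallyEq.deriv_eq ?_) (deriv_update_poissonExt he hf ht hoμ y)
        filter_upwards [lt_mem_nhds (ht μ)] with τ hτ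
        exact hh _ _ (Function.forall_update_iff t (fun _ r => 0 < r) |>.2 ⟨hτ, fun j _ => ht j⟩)
      · simpa only [if_true, hh _ t ht] using lineDeriv_poissonExt he hf ht hoμ y

lemma Dmix_iterP (he : Submodule.span ℝ (Set.range e) = ⊤) (hf : Integrable f)
    (α : Fin m → Bool) (y : EuclideanSpace ℝ (Fin n)) (ht : ∀ j, 0 < t j) :
    Dmix e α (iterP e f) y t = poissonExt e f (some ∘ α) y (axisPoint t) := by
  rw [Dmix, foldl_gradient_eq_poissonExt he hf α (List.nodup_finRange m)
    (o := fun _ => none) (fun _ _ => rfl) (fun y t _ => iterP_eq_poissonExt y t) y ht]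
  congr 1 with j : 1
  simp

end MixedGradient

section PolydiscMeanValue

open Complex

lemma ofReal_sq_integral_le {X : Type*} [MeasurableSpace X] {ν : Measure X} {h : X → ℝ}
    (hh : AEMeasurable h ν) :
    ENNReal.ofReal ((∫ x, h x ∂ν) ^ 2) ≤ ν Set.univ * ∫⁻ x, ENNReal.ofReal (h x ^ 2) ∂ν := by
  have hsq : ∀ r : ℝ, ENNReal.ofReal (r ^ 2) = ‖r‖ₑ ^ (2 : ℝ) := fun r => by
    rw [← sq_abs, ENNReal.ofReal_pow (abs_nonneg _), ← Real.enorm_eq_ofReal_abs]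
    norm_cast
  have hholder : ∫⁻ x, ‖h x‖ₑ ∂ν ≤
      ν Set.univ ^ (1 / 2 : ℝ) * (∫⁻ x, ‖h x‖ₑ ^ (2 : ℝ) ∂ν) ^ (1 / 2 : ℝ) := by
    simpa using ENNReal.lintegral_mul_le_Lp_mul_Lq ν Real.HolderConjugate.two_two
      (f := fun _ => 1) aemeasurable_const hh.enorm
  simp only [hsq]
  calc ‖∫ x, h x ∂ν‖ₑ ^ (2 : ℝ)
      ≤ (ν Set.univ ^ (1 / 2 : ℝ) * (∫⁻ x, ‖h x‖ₑ ^ (2 : ℝ) ∂ν) ^ (1 / 2 : ℝ)) ^ (2 : ℝ) := by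
        gcongr
        exact (enorm_integral_le_lintegral_enorm _).trans hholder
    _ = ν Set.univ * ∫⁻ x, ‖h x‖ₑ ^ (2 : ℝ) ∂ν := by
        rw [ENNReal.mul_rpow_of_nonneg _ _ zero_le_two, ← ENNReal.rpow_mul, ← ENNReal.rpow_mul]
        norm_num

variable {n m : ℕ} {e : Fin m → EuclideanSpace ℝ (Fin n)} {f : EuclideanSpace ℝ (Fin n) → ℝ}
  {t : Fin m → ℝ}

/-- The squared length of the mixed gradient `∇₁⋯∇_m (f*P_t)`, extended to the product of
half-planes like `poissonExt`. -/
def gradSqExt {n m : ℕ} (e : Fin m → EuclideanSpace ℝ (Fin n))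
    (f : EuclideanSpace ℝ (Fin n) → ℝ) (y : EuclideanSpace ℝ (Fin n)) (w : Fin m → ℂ) : ℝ≥0∞ :=
  ∑ α : Fin m → Bool, ENNReal.ofReal (poissonExt e f (some ∘ α) y w ^ 2)

lemma ofReal_gradSq (he : Submodule.span ℝ (Set.range e) = ⊤) (hf : Integrable f)
    (y : EuclideanSpace ℝ (Fin n)) (ht : ∀ j, 0 < t j) :
    ENNReal.ofReal (gradSq e f y t) = gradSqExt e f y (axisPoint t) := by
  rw [gradSq, ENNReal.ofReal_sum_of_nonneg fun _ _ => sq_nonneg _, gradSqExt]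
  simp only [Dmix_iterP he hf _ y ht]

lemma gradSqExt_add_sum (y : EuclideanSpace ℝ (Fin n)) (σ : Fin m → ℝ) (w : Fin m → ℂ) :
    gradSqExt e f (y + ∑ j, σ j • e j) w = gradSqExt e f y (ofReal ∘ σ + w) := by
  simp only [gradSqExt, poissonExt_add_sum]

lemma measurable_poissonExt (hf : Measurable f) (o : Fin m → Option Bool) :
    Measurable fun p : EuclideanSpace ℝ (Fin n) × (Fin m → ℂ) =>
      poissonExt e f o p.1 p.2 := by
  refine (StronglyMeasurable.integral_prod_right (Measurable.stronglyMeasurable ?_)).measurable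
  exact ((measurable_prodKer o).comp (by fun_prop)).mul (hf.comp (by fun_prop))

lemma measurable_gradSqExt (hf : Measurable f) :
    Measurable fun p : EuclideanSpace ℝ (Fin n) × (Fin m → ℂ) => gradSqExt e f p.1 p.2 :=
  Finset.measurable_sum _ fun _ _ =>
    ((measurable_poissonExt hf _).pow_const 2).ennreal_ofReal

lemma volume_polydisc (t : Fin m → ℝ) :
    volume (polydisc t) = ∏ j, volume (Metric.ball (t j * I) (t j / 2)) :=
  volume_pi_pi _

lemma volume_polydisc_ne_top (t : Fin m → ℝ) : volume (polydisc t) ≠ ⊤ := by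
  rw [volume_polydisc]
  exact (ENNReal.prod_lt_top fun j _ => measure_ball_lt_top).ne

lemma volume_polydisc_ne_zero (ht : ∀ j, 0 < t j) : volume (polydisc t) ≠ 0 :=
  ((isOpen_polydisc t).measure_pos _ ⟨_, axisPoint_mem_polydisc ht⟩).ne'

lemma setIntegral_polydisc_prodKer (o : Fin m → Option Bool) (s : Fin m → ℝ)
    (ht : ∀ j, 0 < t j) :
    ∫ w in polydisc t, prodKer o (ofReal ∘ s + w) =
      volume.real (polydisc t) * prodKer o (ofReal ∘ s + axisPoint t) := by
  simp only [prodKer, measureReal_def, volume_polydisc, ENNReal.toReal_prod]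
  rw [polydisc, volume_pi, Measure.restrict_pi_pi, ← Finset.prod_mul_distrib]
  refine (integral_fintype_prod_eq_prod fun j w => poissonKer (o j) (s j + w)).trans ?_
  exact Finset.prod_congr rfl fun j _ => setIntegral_ball_poissonKer (o j) (s j) (ht j)

lemma integrable_prodKer_mul_prod (he : Submodule.span ℝ (Set.range e) = ⊤) (hf : Integrable f)
    (ht : ∀ j, 0 < t j) (o : Fin m → Option Bool) (y : EuclideanSpace ℝ (Fin n)) :
    Integrable (fun p : (Fin m → ℂ) × (Fin m → ℝ) =>
        prodKer o (ofReal ∘ p.2 + p.1) * f (y - ∑ j, p.2 j • e j))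
      ((volume.restrict (polydisc t)).prod volume) := by
  have : IsFiniteMeasure (volume.restrict (polydisc t)) :=
    isFiniteMeasure_restrict.2 (volume_polydisc_ne_top t)
  obtain ⟨bound, hbound_int, hbound⟩ := exists_integrable_bound_prodKer_mul he hf ht y
  refine (hbound_int.comp_snd (volume.restrict (polydisc t))).mono' ?_ ?_
  · exact ((measurable_prodKer o).comp (by fun_prop)).aestronglyMeasurable.mul
      (hf.1.comp_quasiMeasurePreserving (quasiMeasurePreserving_sub_sum he y)).comp_snd
  · filter_upwards [Measure.quasiMeasurePreserving_fst.ae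
      (ae_restrict_mem (isOpen_polydisc t).measurableSet)] with p hp
    exact hbound o p.2 p.1 hp

lemma setIntegral_polydisc_poissonExt (he : Submodule.span ℝ (Set.range e) = ⊤)
    (hf : Integrable f) (ht : ∀ j, 0 < t j) (o : Fin m → Option Bool)
    (y : EuclideanSpace ℝ (Fin n)) :
    ∫ w in polydisc t, poissonExt e f o y w =
      volume.real (polydisc t) * poissonExt e f o y (axisPoint t) := by
  simp only [poissonExt]
  rw [integral_integral_swap (integrable_prodKer_mul_prod he hf ht o y), ← integral_const_mul]
  simp only [integral_mul_const, setIntegral_polydisc_prodKer o _ ht, mul_assoc]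

lemma gradSqExt_axisPoint_le (he : Submodule.span ℝ (Set.range e) = ⊤) (hf : Integrable f)
    (hf_meas : Measurable f) (ht : ∀ j, 0 < t j) (y : EuclideanSpace ℝ (Fin n)) :
    gradSqExt e f y (axisPoint t) ≤
      (∫⁻ w in polydisc t, gradSqExt e f y w) / volume (polydisc t) := by
  have hmeas : ∀ α : Fin m → Bool, Measurable (poissonExt e f (some ∘ α) y) := fun α =>
    (measurable_poissonExt hf_meas _).comp measurable_prodMk_left
  have hne_zero := volume_polydisc_ne_zero ht
  have hne_top := volume_polydisc_ne_top t
  rw [ENNReal.le_div_iff_mul_le (.inl hne_zero) (.inl hne_top), mul_comm]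
  simp only [gradSqExt]
  rw [lintegral_finsetSum _ fun α _ => ((hmeas α).pow_const 2).ennreal_ofReal, Finset.mul_sum]
  refine Finset.sum_le_sum fun α _ => ?_
  have hsq := ofReal_sq_integral_le (hmeas α).aemeasurable (ν := volume.restrict (polydisc t))
  rwa [setIntegral_polydisc_poissonExt he hf ht, mul_pow, ENNReal.ofReal_mul (sq_nonneg _),
    ENNReal.ofReal_pow measureReal_nonneg, ofReal_measureReal hne_top,
    Measure.restrict_apply_univ, sq, mul_assoc,
    ENNReal.mul_le_mul_iff_right hne_zero hne_top] at hsq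

end PolydiscMeanValue

section Cones

open Complex

variable {m : ℕ}

lemma measurableSet_positiveOrthant :
    MeasurableSet {t : Fin m → ℝ | ∀ j, 0 < t j} := by
  rw [Set.ofPred_forall]
  exact .iInter fun j => measurableSet_lt measurable_const (measurable_pi_apply j)

/-- The cone `|Re wⱼ| < Im wⱼ` in the product of half-planes. -/
def halfPlaneCone (m : ℕ) : Set (Fin m → ℂ) := {w | re ∘ w ∈ centeredBox (im ∘ w)}

lemma measurableSet_halfPlaneCone : MeasurableSet (halfPlaneCone m) := by
  simp only [halfPlaneCone, mem_centeredBox, Set.ofPred_forall]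
  exact .iInter fun j => measurableSet_lt (by fun_prop) (by fun_prop)

lemma polydisc_subset_halfPlaneCone (t : Fin m → ℝ) : polydisc t ⊆ halfPlaneCone m :=
  fun _ hw => mem_centeredBox.2 fun j =>
    have h := abs_re_and_im_of_mem_ball (hw j trivial)
    h.1.trans h.2.1

lemma measurableSet_setOf_mem_polydisc :
    MeasurableSet {p : (Fin m → ℝ) × (Fin m → ℂ) | p.2 ∈ polydisc p.1} := by
  simp only [polydisc, Set.mem_univ_pi, Metric.mem_ball, Set.ofPred_forall]
  exact .iInter fun j => measurableSet_lt (by fun_prop) (by fun_prop)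

lemma measurable_volume_polydisc : Measurable fun t : Fin m → ℝ => volume (polydisc t) :=
  measurable_measure_prodMk_left measurableSet_setOf_mem_polydisc

lemma mem_Ioo_of_mem_ball {t : ℝ} {w : ℂ} (hw : w ∈ Metric.ball (t * I) (t / 2)) :
    t ∈ Set.Ioo (2 * w.im / 3) (2 * w.im) := by
  obtain ⟨-, him, him'⟩ := abs_re_and_im_of_mem_ball hw
  exact ⟨by linarith, by linarith⟩

lemma ofReal_div_volume_ball_le {t : ℝ} (ht : 0 < t) {w : ℂ}
    (hw : w ∈ Metric.ball (t * I) (t / 2)) :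
    ENNReal.ofReal t / volume (Metric.ball (t * I) (t / 2)) ≤ ENNReal.ofReal (2 / w.im) := by
  obtain ⟨-, him, him'⟩ := abs_re_and_im_of_mem_ball hw
  have hpi : ENNReal.ofReal Real.pi = NNReal.pi := by
    rw [← NNReal.coe_real_pi, ENNReal.ofReal_coe_nnreal]
  rw [Complex.volume_ball, ← ENNReal.ofReal_pow (by positivity), ← hpi,
    ← ENNReal.ofReal_mul (by positivity), ← ENNReal.ofReal_div_of_pos (by positivity)]
  refine ENNReal.ofReal_le_ofReal ?_
  rw [div_le_div_iff₀ (by positivity) (by linarith)]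
  nlinarith [Real.pi_gt_three, mul_pos ht ht]

lemma ofReal_mul_volume_Ioo_le (r : ℝ) :
    ENNReal.ofReal (2 / r) * volume (Set.Ioo (2 * r / 3) (2 * r)) ≤ 3 := by
  rcases le_or_gt r 0 with hr | hr
  · simp [ENNReal.ofReal_of_nonpos (div_nonpos_of_nonneg_of_nonpos zero_le_two hr)]
  · have hval : 2 / r * (2 * r - 2 * r / 3) = 8 / 3 := by field_simp; norm_num
    rw [Real.volume_Ioo, ← ENNReal.ofReal_mul (by positivity), hval]
    exact ENNReal.ofReal_le_of_le_toReal (by norm_num)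

/-- The weight with which `w` enters the integral over `t` of `t₁ ⋯ t_m` times the average over
`polydisc t`. -/
def polydiscWeight (t : Fin m → ℝ) : (Fin m → ℂ) → ℝ≥0∞ :=
  (polydisc t).indicator fun _ => (∏ j, ENNReal.ofReal (t j)) / volume (polydisc t)

lemma measurable_polydiscWeight :
    Measurable fun p : (Fin m → ℝ) × (Fin m → ℂ) => polydiscWeight p.1 p.2 := by
  have hprod : Measurable fun t : Fin m → ℝ => ∏ j, ENNReal.ofReal (t j) := by fun_prop
  exact ((hprod.div measurable_volume_polydisc).comp measurable_fst).indicator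
    measurableSet_setOf_mem_polydisc

lemma polydiscWeight_le {t : Fin m → ℝ} (ht : ∀ j, 0 < t j) (w : Fin m → ℂ) :
    polydiscWeight t w ≤ (Set.univ.pi fun j => Set.Ioo (2 * (w j).im / 3) (2 * (w j).im)).indicator
      (fun _ => ∏ j, ENNReal.ofReal (2 / (w j).im)) t := by
  refine Set.indicator_apply_le' (fun hw => ?_) fun _ => zero_le
  have ht_mem : t ∈ Set.univ.pi fun j => Set.Ioo (2 * (w j).im / 3) (2 * (w j).im) :=
    fun j _ => mem_Ioo_of_mem_ball (hw j trivial)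
  rw [Set.indicator_of_mem ht_mem, volume_polydisc,
    ← ENNReal.prod_div_distrib fun _ _ _ _ _ => .inr measure_ball_lt_top.ne]
  exact Finset.prod_le_prod' fun j _ => ofReal_div_volume_ball_le (ht j) (hw j trivial)

lemma setLIntegral_polydiscWeight_le (w : Fin m → ℂ) :
    ∫⁻ t in {t : Fin m → ℝ | ∀ j, 0 < t j}, polydiscWeight t w ≤ 3 ^ m := by
  refine (setLIntegral_mono' measurableSet_positiveOrthant
    fun t ht => polydiscWeight_le ht w).trans ((setLIntegral_le_lintegral _ _).trans ?_)
  calc _ = ∏ j, ENNReal.ofReal (2 / (w j).im) *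
          volume (Set.Ioo (2 * (w j).im / 3) (2 * (w j).im)) := by
        rw [lintegral_indicator_const (.univ_pi fun _ => measurableSet_Ioo), volume_pi_pi,
          Finset.prod_mul_distrib]
    _ ≤ ∏ _j : Fin m, 3 := Finset.prod_le_prod' fun j _ => ofReal_mul_volume_Ioo_le _
    _ = 3 ^ m := Fin.prod_const m 3

lemma setLIntegral_polydiscWeight_mul {M : (Fin m → ℂ) → ℝ≥0∞} (hM : Measurable M)
    (t : Fin m → ℝ) :
    ∫⁻ w in halfPlaneCone m, polydiscWeight t w * M w =
      (∫⁻ w in polydisc t, M w) / volume (polydisc t) * ∏ j, ENNReal.ofReal (t j) := by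
  simp only [polydiscWeight, ← Set.indicator_mul_left]
  rw [setLIntegral_indicator (isOpen_polydisc t).measurableSet,
    Set.inter_eq_left.2 (polydisc_subset_halfPlaneCone t), lintegral_const_mul _ hM,
    ENNReal.mul_comm_div, mul_comm]

lemma setLIntegral_axisPoint_le {M : (Fin m → ℂ) → ℝ≥0∞} (hM : Measurable M)
    (hmean : ∀ t, (∀ j, 0 < t j) →
      M (axisPoint t) ≤ (∫⁻ w in polydisc t, M w) / volume (polydisc t)) :
    ∫⁻ t in {t : Fin m → ℝ | ∀ j, 0 < t j}, M (axisPoint t) * ∏ j, ENNReal.ofReal (t j) ≤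
      3 ^ m * ∫⁻ w in halfPlaneCone m, M w := by
  have hslice : ∀ w, Measurable fun t : Fin m → ℝ => polydiscWeight t w := fun w =>
    (measurable_polydiscWeight.comp measurable_prodMk_right :)
  calc ∫⁻ t in {t : Fin m → ℝ | ∀ j, 0 < t j}, M (axisPoint t) * ∏ j, ENNReal.ofReal (t j)
      ≤ ∫⁻ t in {t : Fin m → ℝ | ∀ j, 0 < t j},
          ∫⁻ w in halfPlaneCone m, polydiscWeight t w * M w := by
        refine setLIntegral_mono' measurableSet_positiveOrthant fun t ht => ?_
        rw [setLIntegral_polydiscWeight_mul hM]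
        gcongr
        exact hmean t ht
    _ = ∫⁻ w in halfPlaneCone m,
          ∫⁻ t in {t : Fin m → ℝ | ∀ j, 0 < t j}, polydiscWeight t w * M w :=
        lintegral_lintegral_swap
          (measurable_polydiscWeight.mul (hM.comp measurable_snd)).aemeasurable
    _ = ∫⁻ w in halfPlaneCone m,
          (∫⁻ t in {t : Fin m → ℝ | ∀ j, 0 < t j}, polydiscWeight t w) * M w := by
        simp only [lintegral_mul_const _ (hslice _)]
    _ ≤ ∫⁻ w in halfPlaneCone m, 3 ^ m * M w := by
        gcongr with w
        exact setLIntegral_polydiscWeight_le w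
    _ = 3 ^ m * ∫⁻ w in halfPlaneCone m, M w := lintegral_const_mul _ hM

lemma lintegral_pi_complex {F : (Fin m → ℂ) → ℝ≥0∞} (hF : Measurable F) :
    ∫⁻ w, F w = ∫⁻ τ : Fin m → ℝ, ∫⁻ σ : Fin m → ℝ, F (ofReal ∘ σ + axisPoint τ) := by
  have hcoord : MeasurePreserving fun (p : Fin m → ℝ × ℝ) j => measurableEquivRealProd.symm (p j) :=
    volume_preserving_pi fun _ => Complex.volume_preserving_equiv_real_prod.symm
  have hsplit := hcoord.comp
    (volume_measurePreserving_arrowProdEquivProdArrow ℝ ℝ (Fin m)).symm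
  have htonelli := lintegral_prod_symm _ (hF.comp hsplit.measurable).aemeasurable
    (μ := volume) (ν := volume)
  refine (hsplit.lintegral_comp hF).symm.trans (htonelli.trans ?_)
  refine lintegral_congr fun τ => lintegral_congr fun σ => congrArg F (funext fun j => ?_)
  exact mk_eq_add_mul_I _ _

lemma setLIntegral_halfPlaneCone {M : (Fin m → ℂ) → ℝ≥0∞} (hM : Measurable M) :
    ∫⁻ w in halfPlaneCone m, M w =
      ∫⁻ τ : Fin m → ℝ, ∫⁻ σ in centeredBox τ, M (ofReal ∘ σ + axisPoint τ) := by
  rw [← lintegral_indicator measurableSet_halfPlaneCone,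
    lintegral_pi_complex (hM.indicator measurableSet_halfPlaneCone)]
  refine lintegral_congr fun τ => ?_
  rw [← lintegral_indicator (measurableSet_centeredBox τ)]
  refine lintegral_congr fun σ => ?_
  have hmem : ofReal ∘ σ + axisPoint τ ∈ halfPlaneCone m ↔ σ ∈ centeredBox τ := by
    simp [halfPlaneCone, mem_centeredBox, axisPoint]
  by_cases hσ : σ ∈ centeredBox τ
  · simp only [Set.indicator_of_mem hσ, Set.indicator_of_mem (hmem.2 hσ)]
  · simp only [Set.indicator_of_notMem hσ, Set.indicator_of_notMem (mt hmem.1 hσ)]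

end Cones

section SquareFunctions

variable {n m : ℕ} {e : Fin m → EuclideanSpace ℝ (Fin n)} {f : EuclideanSpace ℝ (Fin n) → ℝ}

lemma gfun_eq (he : Submodule.span ℝ (Set.range e) = ⊤) (hf : Integrable f)
    (x : EuclideanSpace ℝ (Fin n)) :
    gfun e f x = (∫⁻ t in {t : Fin m → ℝ | ∀ j, 0 < t j},
      gradSqExt e f x (axisPoint t) * ∏ j, ENNReal.ofReal (t j)) ^ (1 / 2 : ℝ) := by
  rw [gfun, lintegral_indicator measurableSet_positiveOrthant]
  congr 1
  refine setLIntegral_congr_fun measurableSet_positiveOrthant fun t ht => ?_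
  simp only [ofReal_gradSq he hf x ht]

@[fun_prop]
lemma measurable_axisPoint : Measurable (axisPoint (m := m)) := by
  unfold axisPoint
  fun_prop

lemma measurable_gradSqExt_axisPoint (hf : Measurable f) :
    Measurable fun p : EuclideanSpace ℝ (Fin n) × (Fin m → ℝ) =>
      gradSqExt e f p.1 (axisPoint p.2) := by
  have hgrad := measurable_gradSqExt (e := e) hf
  fun_prop

lemma mem_ntCone_one {x z : EuclideanSpace ℝ (Fin n)} {t : Fin m → ℝ} :
    (z, t) ∈ ntCone e 1 x ↔ (∀ j, 0 < t j) ∧ z ∈ twistedRect e x t := by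
  simp [ntCone]

lemma measurableSet_ntCone_one (he : Submodule.span ℝ (Set.range e) = ⊤)
    (x : EuclideanSpace ℝ (Fin n)) : MeasurableSet (ntCone e 1 x) := by
  have hcone : ntCone e 1 x = Prod.snd ⁻¹' {t : Fin m → ℝ | ∀ j, 0 < t j} ∩
      {p | p.1 ∈ twistedRect e x p.2} := Set.ext fun _ => mem_ntCone_one
  rw [hcone]
  exact (measurable_snd measurableSet_positiveOrthant).inter
    (isOpen_setOf_mem_twistedRect he x).measurableSet

lemma setLIntegral_ntCone_one (he : Submodule.span ℝ (Set.range e) = ⊤)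
    (x : EuclideanSpace ℝ (Fin n)) {F : EuclideanSpace ℝ (Fin n) × (Fin m → ℝ) → ℝ≥0∞}
    (hF : Measurable F) :
    ∫⁻ p in ntCone e 1 x, F p =
      ∫⁻ t in {t : Fin m → ℝ | ∀ j, 0 < t j}, ∫⁻ z in twistedRect e x t, F (z, t) := by
  have hcone := measurableSet_ntCone_one he x
  rw [← lintegral_indicator hcone, Measure.volume_eq_prod,
    lintegral_prod_symm _ (hF.indicator hcone).aemeasurable,
    ← lintegral_indicator measurableSet_positiveOrthant]
  refine lintegral_congr fun t => ?_
  by_cases ht : t ∈ {t : Fin m → ℝ | ∀ j, 0 < t j}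
  · rw [Set.indicator_of_mem ht, ← lintegral_indicator (isOpen_twistedRect he x t).measurableSet]
    refine lintegral_congr fun z => ?_
    by_cases hz : z ∈ twistedRect e x t
    · rw [Set.indicator_of_mem hz, Set.indicator_of_mem (mem_ntCone_one.2 ⟨ht, hz⟩)]
    · rw [Set.indicator_of_notMem hz, Set.indicator_of_notMem fun h => hz (mem_ntCone_one.1 h).2]
  · rw [Set.indicator_of_notMem ht]
    refine lintegral_eq_zero_of_ae_eq_zero (.of_forall fun z => ?_)
    exact Set.indicator_of_notMem (fun h => ht (mem_ntCone_one.1 h).1) _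

lemma Sfun_eq (he : Submodule.span ℝ (Set.range e) = ⊤) (hf : Integrable f)
    (hf_meas : Measurable f) (x : EuclideanSpace ℝ (Fin n)) :
    Sfun e f x = (∫⁻ t in {t : Fin m → ℝ | ∀ j, 0 < t j},
      (∏ j, ENNReal.ofReal (t j)) / volume (twistedRect e x t) *
        ∫⁻ z in twistedRect e x t, gradSqExt e f z (axisPoint t)) ^ (1 / 2 : ℝ) := by
  have hgrad := measurable_gradSqExt_axisPoint (e := e) hf_meas
  have hweight : Measurable fun t : Fin m → ℝ =>
      (∏ j, ENNReal.ofReal (t j)) / volume (twistedRect e x t) := by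
    have hvolume := measurable_volume_twistedRect he x
    fun_prop
  have hcongr : Set.EqOn (fun p : EuclideanSpace ℝ (Fin n) × (Fin m → ℝ) =>
      ENNReal.ofReal (gradSq e f p.1 p.2) * (∏ j, ENNReal.ofReal (p.2 j)) /
        volume (twistedRect e x p.2))
      (fun p => (∏ j, ENNReal.ofReal (p.2 j)) / volume (twistedRect e x p.2) *
        gradSqExt e f p.1 (axisPoint p.2)) (ntCone e 1 x) := fun p hp => by
    simp only [ofReal_gradSq he hf p.1 hp.1, mul_comm, mul_div_assoc]
  have hintegrand : Measurable fun p : EuclideanSpace ℝ (Fin n) × (Fin m → ℝ) =>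
      (∏ j, ENNReal.ofReal (p.2 j)) / volume (twistedRect e x p.2) *
        gradSqExt e f p.1 (axisPoint p.2) :=
    (hweight.comp measurable_snd).mul hgrad
  have hslice : ∀ t : Fin m → ℝ, Measurable fun z => gradSqExt e f z (axisPoint t) := fun t =>
    (hgrad.comp measurable_prodMk_right :)
  have hcone := measurableSet_ntCone_one he x
  rw [Sfun, lintegral_indicator hcone, setLIntegral_congr_fun hcone hcongr,
    setLIntegral_ntCone_one he x hintegrand]
  simp only [lintegral_const_mul _ (hslice _)]

lemma iterP_congr_ae {g : EuclideanSpace ℝ (Fin n) → ℝ} (he : Submodule.span ℝ (Set.range e) = ⊤)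
    (hfg : f =ᵐ[volume] g) : iterP e f = iterP e g := by
  ext y t
  refine integral_congr_ae ?_
  filter_upwards [(quasiMeasurePreserving_sub_sum he y).ae_eq_comp hfg] with s hs
  exact congrArg _ hs

end SquareFunctions

section Comparison

variable {n m : ℕ} {e : Fin m → EuclideanSpace ℝ (Fin n)} {f : EuclideanSpace ℝ (Fin n) → ℝ}

lemma measurable_gradSqExt_right (hf : Measurable f) (y : EuclideanSpace ℝ (Fin n)) :
    Measurable (gradSqExt e f y) :=
  ((measurable_gradSqExt hf).comp measurable_prodMk_left :)

lemma setLIntegral_gradSqExt_halfPlaneCone_le (he : Submodule.span ℝ (Set.range e) = ⊤)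
    (hf_meas : Measurable f) (x : EuclideanSpace ℝ (Fin n)) :
    ∫⁻ w in halfPlaneCone m, gradSqExt e f x w ≤
      4 ^ m * ∫⁻ t in {t : Fin m → ℝ | ∀ j, 0 < t j},
        (∏ j, ENNReal.ofReal (t j)) / volume (twistedRect e x t) *
          ∫⁻ z in twistedRect e x t, gradSqExt e f z (axisPoint t) := by
  have hgrad := measurable_gradSqExt_axisPoint (e := e) hf_meas
  rw [setLIntegral_halfPlaneCone (measurable_gradSqExt_right hf_meas x),
    ← lintegral_const_mul' _ _ (by finiteness), ← lintegral_indicator measurableSet_positiveOrthant]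
  refine lintegral_mono fun t => ?_
  by_cases ht : t ∈ {t : Fin m → ℝ | ∀ j, 0 < t j}
  · simp only [Set.indicator_of_mem ht, ← gradSqExt_add_sum]
    exact setLIntegral_centeredBox_le he (hgrad.comp measurable_prodMk_right :) x ht
  · have hempty : centeredBox t = ∅ := Set.eq_empty_of_forall_notMem fun s hs =>
      ht fun j => (abs_nonneg _).trans_lt (mem_centeredBox.1 hs j)
    simp [hempty]

theorem gfun_le_Sfun_general (he : Submodule.span ℝ (Set.range e) = ⊤) (hf : Integrable f)
    (x : EuclideanSpace ℝ (Fin n)) :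
    gfun e f x ≤ (12 ^ m : ℝ≥0∞) ^ (1 / 2 : ℝ) * Sfun e f x := by
  wlog hf_meas : Measurable f generalizing f
  · have hle := this (hf.congr hf.1.ae_eq_mk) hf.1.stronglyMeasurable_mk.measurable
    simp only [gfun, Sfun, gradSq, ← iterP_congr_ae he hf.1.ae_eq_mk] at hle
    simpa only [gfun, Sfun, gradSq] using hle
  rw [gfun_eq he hf, Sfun_eq he hf hf_meas, ← ENNReal.mul_rpow_of_nonneg _ _ (by norm_num)]
  gcongr
  calc _ ≤ 3 ^ m * ∫⁻ w in halfPlaneCone m, gradSqExt e f x w :=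
        setLIntegral_axisPoint_le (measurable_gradSqExt_right hf_meas x)
          fun t ht => gradSqExt_axisPoint_le he hf hf_meas ht x
    _ ≤ 3 ^ m * (4 ^ m * _) := by
        gcongr
        exact setLIntegral_gradSqExt_halfPlaneCone_le he hf_meas x
    _ = 12 ^ m * _ := by
        rw [← mul_assoc, ← mul_pow]
        norm_num

end Comparison

lemma span_range_eq_top_of_linearIndependent {K V ι : Type*} [DivisionRing K] [AddCommGroup V]
    [Module K V] [FiniteDimensional K V] [Fintype ι] {e : ι → V}
    (hcard : Module.finrank K V ≤ Fintype.card ι)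
    (hindep : ∀ s : Finset ι, s.card = Module.finrank K V →
      LinearIndependent K (fun i : s => e i)) :
    Submodule.span K (Set.range e) = ⊤ := by
  obtain ⟨s, -, hs⟩ := Finset.exists_subset_card_eq (s := Finset.univ) hcard
  have hspan := (hindep s hs).span_eq_top_of_card_eq_finrank' (by simp [hs])
  rw [eq_top_iff, ← hspan]
  exact Submodule.span_mono (Set.range_comp_subset_range _ e)

/-- Pointwise control of the Littlewood–Paley `g`-function by the area function:
`g(f)(x) ≲ S(f)(x)`. -/
theorem gfun_le_Sfun {n m : ℕ} (hnm : n ≤ m)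
    (e : Fin m → EuclideanSpace ℝ (Fin n))
    (hunit : ∀ j, ‖e j‖ = 1)
    (hindep : ∀ s : Finset (Fin m), s.card = n →
      LinearIndependent ℝ (fun i : s => e i)) :
    ∃ C : ℝ≥0∞, 0 < C ∧ C ≠ ⊤ ∧
      ∀ (f : EuclideanSpace ℝ (Fin n) → ℝ), Integrable f →
      ∀ x : EuclideanSpace ℝ (Fin n), gfun e f x ≤ C * Sfun e f x :=
  have he := span_range_eq_top_of_linearIndependent (e := e) (by simpa) (by simpa)
  ⟨(12 ^ m) ^ (1 / 2 : ℝ), ENNReal.rpow_pos (by positivity) (by finiteness),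
    ENNReal.rpow_ne_top_of_nonneg (by norm_num) (by finiteness),
    fun _ hf x => gfun_le_Sfun_general he hf x⟩

end
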